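/- arXiv:2509.07037 — 2 statements merged into one kernel-verified Lean document; each statement's English description precedes it below -/
import Mathlib

section
/- For every positive integer n, the number of representations of n as a sum of four integer squares (counting order and signs) equals 8 times the sum of the divisors d of n with 4 ∤ d; that is, r_4(n) = 8 · Σ_{d | n, 4 ∤ d} d. -/
namespace JFS

open Finset

/-- Positive solutions `((a, b), (x, y))` of `a * x + b * y = n`. -/
def Q (n : ℕ) : Finset ((ℕ × ℕ) × (ℕ × ℕ)) :=
  ((range (n + 1) ×ˢ range (n + 1)) ×ˢ (range (n + 1) ×ˢ range (n + 1))).filter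
    (fun q => 0 < q.1.1 ∧ 0 < q.1.2 ∧ 0 < q.2.1 ∧ 0 < q.2.2 ∧
      q.1.1 * q.2.1 + q.1.2 * q.2.2 = n)

theorem mem_Q {n : ℕ} {q : (ℕ × ℕ) × (ℕ × ℕ)} : q ∈ Q n ↔
    0 < q.1.1 ∧ 0 < q.1.2 ∧ 0 < q.2.1 ∧ 0 < q.2.2 ∧ q.1.1 * q.2.1 + q.1.2 * q.2.2 = n := by
  obtain ⟨⟨a, b⟩, ⟨x, y⟩⟩ := q
  simp only [Q, mem_filter, mem_product, mem_range]
  constructor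
  · exact fun h => h.2
  · rintro ⟨ha, hb, hx, hy, h⟩
    refine ⟨⟨⟨?_, ?_⟩, ⟨?_, ?_⟩⟩, ha, hb, hx, hy, h⟩ <;> nlinarith

theorem sum_swap_ab (n : ℕ) (P : ℕ → ℕ → ℕ → ℕ → Prop) [∀ a b x y, Decidable (P a b x y)]
    (G : ℕ → ℕ → ℕ → ℕ → ℤ) :
    ∑ q ∈ Q n with P q.1.1 q.1.2 q.2.1 q.2.2, G q.1.1 q.1.2 q.2.1 q.2.2 =
    ∑ q ∈ Q n with P q.1.2 q.1.1 q.2.2 q.2.1, G q.1.2 q.1.1 q.2.2 q.2.1 := by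
  refine sum_nbij' (fun q => (q.1.swap, q.2.swap)) (fun q => (q.1.swap, q.2.swap)) ?_ ?_ ?_ ?_ ?_
  · rintro ⟨⟨a, b⟩, ⟨x, y⟩⟩ h
    simp only [mem_filter, mem_Q, Prod.swap] at h ⊢
    refine ⟨⟨h.1.2.1, h.1.1, h.1.2.2.2.1, h.1.2.2.1, ?_⟩, h.2⟩
    linarith [h.1.2.2.2.2]
  · rintro ⟨⟨a, b⟩, ⟨x, y⟩⟩ h
    simp only [mem_filter, mem_Q, Prod.swap] at h ⊢
    refine ⟨⟨h.1.2.1, h.1.1, h.1.2.2.2.1, h.1.2.2.1, ?_⟩, h.2⟩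
    linarith [h.1.2.2.2.2]
  · intro q _; rfl
  · intro q _; rfl
  · intro q _; rfl

theorem sum_swap_ax (n : ℕ) (P : ℕ → ℕ → ℕ → ℕ → Prop) [∀ a b x y, Decidable (P a b x y)]
    (G : ℕ → ℕ → ℕ → ℕ → ℤ) :
    ∑ q ∈ Q n with P q.1.1 q.1.2 q.2.1 q.2.2, G q.1.1 q.1.2 q.2.1 q.2.2 =
    ∑ q ∈ Q n with P q.2.1 q.2.2 q.1.1 q.1.2, G q.2.1 q.2.2 q.1.1 q.1.2 := by
  refine sum_nbij' (fun q => q.swap) (fun q => q.swap) ?_ ?_ ?_ ?_ ?_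
  · rintro ⟨⟨a, b⟩, ⟨x, y⟩⟩ h
    simp only [mem_filter, mem_Q, Prod.swap] at h ⊢
    refine ⟨⟨h.1.2.2.1, h.1.2.2.2.1, h.1.1, h.1.2.1, ?_⟩, h.2⟩
    linarith [h.1.2.2.2.2]
  · rintro ⟨⟨a, b⟩, ⟨x, y⟩⟩ h
    simp only [mem_filter, mem_Q, Prod.swap] at h ⊢
    refine ⟨⟨h.1.2.2.1, h.1.2.2.2.1, h.1.1, h.1.2.1, ?_⟩, h.2⟩
    linarith [h.1.2.2.2.2]
  · intro q _; rfl
  · intro q _; rfl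
  · intro q _; rfl

theorem sum_tri (n : ℕ) (u v : (ℕ × ℕ) × (ℕ × ℕ) → ℕ) (G : (ℕ × ℕ) × (ℕ × ℕ) → ℤ) :
    ∑ q ∈ Q n, G q = ∑ q ∈ Q n with u q < v q, G q + ∑ q ∈ Q n with u q = v q, G q +
      ∑ q ∈ Q n with v q < u q, G q := by
  simp only [sum_filter, ← sum_add_distrib]
  refine sum_congr rfl fun q _ => ?_
  rcases lt_trichotomy (u q) (v q) with h | h | h
  · simp [h, h.ne, h.le]
  · simp [h]
  · simp [h, h.ne', h.le]

/-- The diagonal `x = y`. -/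
theorem sum_diag (n : ℕ) (hn : 0 < n) (G : ℕ → ℕ → ℕ → ℤ) :
    ∑ q ∈ Q n with q.2.1 = q.2.2, G q.1.1 q.1.2 q.2.1 =
    ∑ d ∈ n.divisors, ∑ l ∈ Ico 1 d, G l (d - l) (n / d) := by
  rw [sum_sigma']
  refine sum_nbij' (fun q => (⟨q.1.1 + q.1.2, q.1.1⟩ : (_ : ℕ) × ℕ))
    (fun p => ((p.2, p.1 - p.2), (n / p.1, n / p.1))) ?_ ?_ ?_ ?_ ?_
  · rintro ⟨⟨a, b⟩, ⟨x, y⟩⟩ h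
    simp only [mem_filter, mem_Q, mem_sigma, Nat.mem_divisors, mem_Ico] at h ⊢
    obtain ⟨⟨ha, hb, hx, hy, h⟩, rfl⟩ := h
    exact ⟨⟨⟨x, by rw [← h]; ring⟩, hn.ne'⟩, by omega, by omega⟩
  · rintro ⟨d, l⟩ h
    simp only [mem_filter, mem_Q, mem_sigma, Nat.mem_divisors, mem_Ico] at h ⊢
    obtain ⟨⟨hd, _⟩, h1, h2⟩ := h
    have h3 : 0 < n / d := Nat.div_pos (Nat.le_of_dvd hn hd) (by omega)
    refine ⟨⟨h1, by omega, h3, h3, ?_⟩, trivial⟩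
    rw [← add_mul, Nat.add_sub_cancel' h2.le, Nat.mul_div_cancel' hd]
  · rintro ⟨⟨a, b⟩, ⟨x, y⟩⟩ h
    simp only [mem_filter, mem_Q] at h
    obtain ⟨⟨ha, hb, hx, hy, h⟩, rfl⟩ := h
    have : n / (a + b) = x := by
      rw [← h, ← add_mul, Nat.mul_div_cancel_left _ (by omega)]
    simp [this]
  · rintro ⟨d, l⟩ h
    simp only [mem_sigma, mem_Ico] at h
    have : l + (d - l) = d := by omega
    simp [this]
  · rintro ⟨⟨a, b⟩, ⟨x, y⟩⟩ h
    simp only [mem_filter, mem_Q] at h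
    obtain ⟨⟨ha, hb, hx, hy, h⟩, rfl⟩ := h
    have : n / (a + b) = x := by
      rw [← h, ← add_mul, Nat.mul_div_cancel_left _ (by omega)]
    simp [this]

theorem L1 (n : ℕ) (F : ℤ → ℤ) :
    ∑ q ∈ Q n with q.2.2 < q.2.1, F ((q.1.1 : ℤ) + q.1.2) =
    ∑ q ∈ Q n with q.1.2 < q.1.1, F (q.1.1 : ℤ) := by
  refine sum_nbij' (fun q => ((q.1.1 + q.1.2, q.1.1), (q.2.2, q.2.1 - q.2.2)))
    (fun q => ((q.1.2, q.1.1 - q.1.2), (q.2.1 + q.2.2, q.2.1))) ?_ ?_ ?_ ?_ ?_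
  · rintro ⟨⟨a, b⟩, ⟨x, y⟩⟩ h
    simp only [mem_filter, mem_Q] at h ⊢
    obtain ⟨⟨ha, hb, hx, hy, h⟩, h2⟩ := h
    obtain ⟨k, rfl⟩ := Nat.exists_eq_add_of_lt h2
    refine ⟨⟨by omega, by omega, by omega, by omega, ?_⟩, by omega⟩
    rw [← h, show y + k + 1 - y = k + 1 by omega]; ring
  · rintro ⟨⟨a, b⟩, ⟨x, y⟩⟩ h
    simp only [mem_filter, mem_Q] at h ⊢
    obtain ⟨⟨ha, hb, hx, hy, h⟩, h2⟩ := h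
    obtain ⟨k, rfl⟩ := Nat.exists_eq_add_of_lt h2
    refine ⟨⟨by omega, by omega, by omega, by omega, ?_⟩, by omega⟩
    rw [← h, show b + k + 1 - b = k + 1 by omega]; ring
  · rintro ⟨⟨a, b⟩, ⟨x, y⟩⟩ h
    simp only [mem_filter, mem_Q] at h
    ext <;> dsimp only <;> omega
  · rintro ⟨⟨a, b⟩, ⟨x, y⟩⟩ h
    simp only [mem_filter, mem_Q] at h
    ext <;> dsimp only <;> omega
  · rintro ⟨⟨a, b⟩, ⟨x, y⟩⟩ h
    simp

theorem L6 (n : ℕ) (F : ℤ → ℤ) :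
    ∑ q ∈ Q n with q.1.2 < q.1.1, F ((q.1.1 : ℤ) - q.1.2) =
    ∑ q ∈ Q n with q.2.1 < q.2.2, F (q.1.1 : ℤ) := by
  refine sum_nbij' (fun q => ((q.1.1 - q.1.2, q.1.2), (q.2.1, q.2.1 + q.2.2)))
    (fun q => ((q.1.1 + q.1.2, q.1.2), (q.2.1, q.2.2 - q.2.1))) ?_ ?_ ?_ ?_ ?_
  · rintro ⟨⟨a, b⟩, ⟨x, y⟩⟩ h
    simp only [mem_filter, mem_Q] at h ⊢
    obtain ⟨⟨ha, hb, hx, hy, h⟩, h2⟩ := h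
    obtain ⟨k, rfl⟩ := Nat.exists_eq_add_of_lt h2
    refine ⟨⟨by omega, by omega, by omega, by omega, ?_⟩, by omega⟩
    rw [← h, show b + k + 1 - b = k + 1 by omega]; ring
  · rintro ⟨⟨a, b⟩, ⟨x, y⟩⟩ h
    simp only [mem_filter, mem_Q] at h ⊢
    obtain ⟨⟨ha, hb, hx, hy, h⟩, h2⟩ := h
    obtain ⟨k, rfl⟩ := Nat.exists_eq_add_of_lt h2
    refine ⟨⟨by omega, by omega, by omega, by omega, ?_⟩, by omega⟩
    rw [← h, show x + k + 1 - x = k + 1 by omega]; ring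
  · rintro ⟨⟨a, b⟩, ⟨x, y⟩⟩ h
    simp only [mem_filter, mem_Q] at h
    ext <;> dsimp only <;> omega
  · rintro ⟨⟨a, b⟩, ⟨x, y⟩⟩ h
    simp only [mem_filter, mem_Q] at h
    ext <;> dsimp only <;> omega
  · rintro ⟨⟨a, b⟩, ⟨x, y⟩⟩ h
    simp only [mem_filter, mem_Q] at h
    simp only
    rw [Nat.cast_sub h.2.le]

theorem L7 (n : ℕ) (F : ℤ → ℤ) :
    ∑ q ∈ Q n with q.1.1 < q.1.2, F (q.1.1 : ℤ) =
    ∑ q ∈ Q n with q.2.2 < q.2.1, F (q.1.1 : ℤ) := by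
  refine sum_nbij' (fun q => ((q.1.1, q.1.2 - q.1.1), (q.2.1 + q.2.2, q.2.2)))
    (fun q => ((q.1.1, q.1.1 + q.1.2), (q.2.1 - q.2.2, q.2.2))) ?_ ?_ ?_ ?_ ?_
  · rintro ⟨⟨a, b⟩, ⟨x, y⟩⟩ h
    simp only [mem_filter, mem_Q] at h ⊢
    obtain ⟨⟨ha, hb, hx, hy, h⟩, h2⟩ := h
    obtain ⟨k, rfl⟩ := Nat.exists_eq_add_of_lt h2
    refine ⟨⟨by omega, by omega, by omega, by omega, ?_⟩, by omega⟩
    rw [← h, show a + k + 1 - a = k + 1 by omega]; ring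
  · rintro ⟨⟨a, b⟩, ⟨x, y⟩⟩ h
    simp only [mem_filter, mem_Q] at h ⊢
    obtain ⟨⟨ha, hb, hx, hy, h⟩, h2⟩ := h
    obtain ⟨k, rfl⟩ := Nat.exists_eq_add_of_lt h2
    refine ⟨⟨by omega, by omega, by omega, by omega, ?_⟩, by omega⟩
    rw [← h, show y + k + 1 - y = k + 1 by omega]; ring
  · rintro ⟨⟨a, b⟩, ⟨x, y⟩⟩ h
    simp only [mem_filter, mem_Q] at h
    ext <;> dsimp only <;> omega
  · rintro ⟨⟨a, b⟩, ⟨x, y⟩⟩ h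
    simp only [mem_filter, mem_Q] at h
    ext <;> dsimp only <;> omega
  · rintro ⟨⟨a, b⟩, ⟨x, y⟩⟩ h
    rfl

theorem sum_Ico_const (d : ℕ) (hd : 0 < d) (c : ℤ) : ∑ _l ∈ Ico 1 d, c = ((d : ℤ) - 1) * c := by
  simp [Nat.cast_sub hd]

/-- Liouville's identity. -/
theorem liouville (n : ℕ) (hn : 0 < n) (F : ℤ → ℤ) (hF : ∀ x, F (-x) = F x) :
    ∑ q ∈ Q n, (F ((q.1.1 : ℤ) - q.1.2) - F ((q.1.1 : ℤ) + q.1.2)) =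
    ∑ d ∈ n.divisors, (((d : ℤ) - 1) * F 0 + 2 * (((n / d : ℕ) : ℤ) - 1) * F d
      - 2 * ∑ l ∈ Ico 1 d, F l - ((d : ℤ) - 1) * F d) := by
  have pos : ∀ d ∈ n.divisors, 0 < d := fun d hd => Nat.pos_of_mem_divisors hd
  have e1 := sum_tri n (fun q => q.2.1) (fun q => q.2.2) (fun q => F ((q.1.1 : ℤ) + q.1.2))
  have e2 := sum_tri n (fun q => q.1.1) (fun q => q.1.2) (fun q => F ((q.1.1 : ℤ) - q.1.2))
  have e3 := sum_tri n (fun q => q.1.1) (fun q => q.1.2) (fun q => F (q.1.1 : ℤ))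
  have e4 := sum_tri n (fun q => q.2.1) (fun q => q.2.2) (fun q => F (q.1.1 : ℤ))
  have s1 := sum_swap_ab n (fun a b x y => x < y) (fun a b x y => F ((a : ℤ) + b))
  have s1' : ∑ q ∈ Q n with q.2.2 < q.2.1, F ((q.1.2 : ℤ) + q.1.1) =
    ∑ q ∈ Q n with q.2.2 < q.2.1, F ((q.1.1 : ℤ) + q.1.2) :=
    sum_congr rfl fun q _ => by rw [add_comm]
  have s2 := sum_swap_ab n (fun a b x y => a < b) (fun a b x y => F ((a : ℤ) - b))
  have s2' : ∑ q ∈ Q n with q.1.2 < q.1.1, F ((q.1.2 : ℤ) - q.1.1) =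
    ∑ q ∈ Q n with q.1.2 < q.1.1, F ((q.1.1 : ℤ) - q.1.2) :=
    sum_congr rfl fun q _ => by rw [← hF, neg_sub]
  have l1 := L1 n F
  have l6 := L6 n F
  have l7 := L7 n F
  have d1 := sum_diag n hn (fun a b x => F ((a : ℤ) + b))
  have d1' : ∑ d ∈ n.divisors, ∑ l ∈ Ico 1 d, F ((l : ℤ) + ((d - l : ℕ) : ℤ)) =
      ∑ d ∈ n.divisors, ((d : ℤ) - 1) * F d := by
    refine sum_congr rfl fun d hd => ?_
    rw [← sum_Ico_const d (pos d hd)]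
    refine sum_congr rfl fun l hl => ?_
    rw [mem_Ico] at hl
    congr 1
    omega
  have d2 : ∑ q ∈ Q n with q.1.1 = q.1.2, F ((q.1.1 : ℤ) - q.1.2) =
      ∑ d ∈ n.divisors, ((d : ℤ) - 1) * F 0 := by
    have := sum_swap_ax n (fun a b x y => a = b) (fun a b x y => F ((a : ℤ) - b))
    rw [this, sum_congr rfl (g := fun _ => F 0), sum_diag n hn (fun _ _ _ => F 0)]
    · exact sum_congr rfl fun d hd => sum_Ico_const d (pos d hd) _
    · intro q hq
      rw [mem_filter] at hq
      rw [hq.2, sub_self]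
  have d3 : ∑ q ∈ Q n with q.1.1 = q.1.2, F (q.1.1 : ℤ) =
      ∑ d ∈ n.divisors, (((n / d : ℕ) : ℤ) - 1) * F d := by
    have := sum_swap_ax n (fun a b x y => a = b) (fun a b x y => F (a : ℤ))
    rw [this, sum_diag n hn (fun _ _ x => F x),
      ← Nat.sum_div_divisors n (fun d => (((n / d : ℕ) : ℤ) - 1) * F d)]
    refine sum_congr rfl fun d hd => ?_
    rw [sum_Ico_const d (pos d hd), Nat.div_div_self (Nat.dvd_of_mem_divisors hd) hn.ne']
  have d4 := sum_diag n hn (fun a _ _ => F a)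
  simp only [sum_add_distrib, sum_sub_distrib, ← mul_sum, mul_assoc] at *
  linarith

end JFS
namespace JFS

open Finset

/-- Representations as a sum of two squares. -/
noncomputable def R (n : ℕ) : Finset (ℤ × ℤ) :=
  (Icc (-(n : ℤ)) n ×ˢ Icc (-(n : ℤ)) n).filter (fun z => z.1 ^ 2 + z.2 ^ 2 = (n : ℤ))

theorem mem_R {n : ℕ} {z : ℤ × ℤ} : z ∈ R n ↔ z.1 ^ 2 + z.2 ^ 2 = (n : ℤ) := by
  obtain ⟨x, y⟩ := z
  simp only [R, mem_filter, mem_product, mem_Icc]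
  constructor
  · exact fun h => h.2
  · intro h
    have hx := Int.le_self_sq x
    have hx' := Int.le_self_sq (-x)
    have hy := Int.le_self_sq y
    have hy' := Int.le_self_sq (-y)
    refine ⟨⟨⟨?_, ?_⟩, ⟨?_, ?_⟩⟩, h⟩ <;> nlinarith

/-- The divisor sum of the character modulo `4`. -/
def del (n : ℕ) : ℤ := ∑ d ∈ n.divisors, ZMod.χ₄ (d : ZMod 4)

theorem del_split (p m : ℕ) (hp : p.Prime) (hm : 0 < m) :
    del (p * m) = ZMod.χ₄ (p : ZMod 4) * del m +
      ∑ d ∈ m.divisors with ¬ p ∣ d, ZMod.χ₄ (d : ZMod 4) := by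
  rw [del, ← sum_filter_add_sum_filter_not _ (fun d => p ∣ d)]
  congr 1
  · rw [del, mul_sum]
    symm
    refine sum_nbij (fun d => p * d) ?_ ?_ ?_ ?_
    · intro d hd
      simp only [mem_filter, Nat.mem_divisors] at hd ⊢
      exact ⟨⟨Nat.mul_dvd_mul_left p hd.1, (Nat.mul_pos hp.pos hm).ne'⟩, dvd_mul_right _ _⟩
    · intro d _ e _ h
      exact Nat.eq_of_mul_eq_mul_left hp.pos h
    · intro d hd
      simp only [coe_filter, Nat.mem_divisors, Set.mem_ofPred_eq] at hd
      obtain ⟨⟨h1, _⟩, e, rfl⟩ := hd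
      refine ⟨e, ?_, rfl⟩
      simp only [mem_coe, Nat.mem_divisors]
      exact ⟨Nat.dvd_of_mul_dvd_mul_left hp.pos h1, hm.ne'⟩
    · intro d _
      rw [Nat.cast_mul, map_mul]
  · congr 1
    ext d
    simp only [mem_filter, Nat.mem_divisors]
    constructor
    · rintro ⟨⟨h1, _⟩, h2⟩
      exact ⟨⟨Nat.Coprime.dvd_of_dvd_mul_left ((Nat.Prime.coprime_iff_not_dvd hp).2 h2).symm h1,
        hm.ne'⟩, h2⟩
    · rintro ⟨⟨h1, _⟩, h2⟩
      exact ⟨⟨h1.mul_left p, (Nat.mul_pos hp.pos hm).ne'⟩, h2⟩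

theorem del_one_step (p m : ℕ) (hp : p.Prime) (hm : 0 < m) (h : ¬ p ∣ m) :
    del (p * m) = (1 + ZMod.χ₄ (p : ZMod 4)) * del m := by
  rw [del_split p m hp hm, filter_true_of_mem]
  · rw [del]; ring
  · intro d hd hpd
    exact h (hpd.trans (Nat.dvd_of_mem_divisors hd))

theorem del_two_step (p k : ℕ) (hp : p.Prime) (hk : 0 < k) :
    del (p * (p * k)) = (1 + ZMod.χ₄ (p : ZMod 4)) * del (p * k) -
      ZMod.χ₄ (p : ZMod 4) * del k := by
  have h1 := del_split p (p * k) hp (Nat.mul_pos hp.pos hk)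
  have h2 := del_split p k hp hk
  have h3 : (p * k).divisors.filter (fun d => ¬ p ∣ d) = k.divisors.filter (fun d => ¬ p ∣ d) := by
    ext d
    simp only [mem_filter, Nat.mem_divisors]
    constructor
    · rintro ⟨⟨h1, _⟩, h2⟩
      exact ⟨⟨Nat.Coprime.dvd_of_dvd_mul_left ((Nat.Prime.coprime_iff_not_dvd hp).2 h2).symm h1,
        hk.ne'⟩, h2⟩
    · rintro ⟨⟨h1, _⟩, h2⟩
      exact ⟨⟨h1.mul_left p, (Nat.mul_pos hp.pos hk).ne'⟩, h2⟩
  rw [h3] at h1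
  rw [h1, h2]; ring

theorem card_A (p m : ℕ) (hp : p.Prime) (a b : ℤ) (hab : a ^ 2 + b ^ 2 = p) :
    #{z ∈ R (p * m) | (p : ℤ) ∣ z.1 * a + z.2 * b} = #(R m) := by
  have hp0 : (p : ℤ) ≠ 0 := by exact_mod_cast hp.ne_zero
  have hpp : Prime (p : ℤ) := Nat.prime_iff_prime_int.1 hp
  symm
  refine card_nbij' (fun z => (z.1 * a - z.2 * b, z.2 * a + z.1 * b))
    (fun z => ((z.1 * a + z.2 * b) / p, (z.2 * a - z.1 * b) / p)) ?_ ?_ ?_ ?_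
  · rintro ⟨u, v⟩ h
    simp only [mem_coe, mem_filter, mem_R] at h ⊢
    push_cast
    rw [← h, ← hab]
    exact ⟨by ring, u, by ring⟩
  · rintro ⟨x, y⟩ h
    simp only [mem_coe, mem_filter, mem_R] at h ⊢
    push_cast at h
    obtain ⟨h1, s, hs⟩ := h
    have : (p : ℤ) ∣ y * a - x * b := by
      apply hpp.dvd_of_dvd_pow (n := 2)
      refine ⟨p * m - p * s ^ 2, ?_⟩
      linear_combination (a ^ 2 + b ^ 2) * h1 + (p * m) * hab - (x * a + y * b + p * s) * hs
    obtain ⟨t, ht⟩ := this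
    rw [hs, ht, Int.mul_ediv_cancel_left _ hp0, Int.mul_ediv_cancel_left _ hp0]
    have h2 : (p : ℤ) ^ 2 * (s ^ 2 + t ^ 2) = p ^ 2 * m := by
      linear_combination (a ^ 2 + b ^ 2) * h1 + (p * m) * hab - (x * a + y * b + p * s) * hs -
        (y * a - x * b + p * t) * ht
    exact mul_left_cancel₀ (pow_ne_zero 2 hp0) h2
  · rintro ⟨u, v⟩ h
    ext <;> dsimp only
    · rw [show (u * a - v * b) * a + (v * a + u * b) * b = p * u by rw [← hab]; ring,
        Int.mul_ediv_cancel_left _ hp0]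
    · rw [show (v * a + u * b) * a - (u * a - v * b) * b = p * v by rw [← hab]; ring,
        Int.mul_ediv_cancel_left _ hp0]
  · rintro ⟨x, y⟩ h
    simp only [mem_coe, mem_filter, mem_R] at h
    push_cast at h
    obtain ⟨h1, s, hs⟩ := h
    have : (p : ℤ) ∣ y * a - x * b := by
      apply hpp.dvd_of_dvd_pow (n := 2)
      refine ⟨p * m - p * s ^ 2, ?_⟩
      linear_combination (a ^ 2 + b ^ 2) * h1 + (p * m) * hab - (x * a + y * b + p * s) * hs
    obtain ⟨t, ht⟩ := this
    simp only [hs, ht, Int.mul_ediv_cancel_left _ hp0]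
    ext <;> dsimp only <;> apply mul_left_cancel₀ hp0
    · linear_combination -a * hs + b * ht + x * hab
    · linear_combination -a * ht - b * hs + y * hab

theorem card_scale (p k : ℕ) (hp : p.Prime) :
    #{z ∈ R (p * (p * k)) | (p : ℤ) ∣ z.1 ∧ (p : ℤ) ∣ z.2} = #(R k) := by
  have hp0 : (p : ℤ) ≠ 0 := by exact_mod_cast hp.ne_zero
  symm
  refine card_nbij (fun z => (p * z.1, p * z.2)) ?_ ?_ ?_
  · rintro ⟨u, v⟩ h
    simp only [mem_coe, mem_filter, mem_R] at h ⊢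
    push_cast
    rw [← h]
    exact ⟨by ring, dvd_mul_right _ _, dvd_mul_right _ _⟩
  · rintro ⟨u, v⟩ _ ⟨u', v'⟩ _ h
    simpa [hp.ne_zero] using h
  · rintro ⟨x, y⟩ h
    simp only [coe_filter, Set.mem_ofPred_eq, mem_R] at h
    obtain ⟨h, ⟨u, rfl⟩, ⟨v, rfl⟩⟩ := h
    refine ⟨(u, v), ?_, rfl⟩
    simp only [mem_coe, mem_R]
    push_cast at h
    apply mul_left_cancel₀ (pow_ne_zero 2 hp0)
    linear_combination h

theorem not_both (p m : ℕ) (hp : p.Prime) (h : ¬ p ∣ m) (z : ℤ × ℤ) (hz : z ∈ R (p * m)) :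
    ¬ ((p : ℤ) ∣ z.1 ∧ (p : ℤ) ∣ z.2) := by
  have hp0 : (p : ℤ) ≠ 0 := by exact_mod_cast hp.ne_zero
  rintro ⟨⟨u, hu⟩, ⟨v, hv⟩⟩
  rw [mem_R, hu, hv] at hz
  push_cast at hz
  apply h
  have : (p : ℤ) ∣ m := by
    refine ⟨u ^ 2 + v ^ 2, mul_left_cancel₀ hp0 ?_⟩
    linear_combination -hz
  exact_mod_cast this

theorem both_of_three (p m : ℕ) (hp : p.Prime) (h3 : p % 4 = 3) (z : ℤ × ℤ)
    (hz : z ∈ R (p * m)) : (p : ℤ) ∣ z.1 ∧ (p : ℤ) ∣ z.2 := by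
  have := Fact.mk hp
  obtain ⟨x, y⟩ := z
  rw [mem_R] at hz
  have e : (x : ZMod p) ^ 2 + (y : ZMod p) ^ 2 = 0 := by
    have := congrArg (Int.cast : ℤ → ZMod p) hz
    push_cast at this
    simpa using this
  simp only [← ZMod.intCast_zmod_eq_zero_iff_dvd, ← ZMod.intCast_zmod_eq_zero_iff_dvd]
  constructor
  · by_contra hx
    exact ZMod.mod_four_ne_three_of_sq_eq_neg_sq (p := p) hx (y := (y : ZMod p)) (by linear_combination e) h3
  · by_contra hx
    exact ZMod.mod_four_ne_three_of_sq_eq_neg_sq' (p := p) hx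
      (x := (x : ZMod p)) (by linear_combination e) h3

theorem card_one (p m : ℕ) (hp : p.Prime) (h1 : p % 4 = 1) :
    #(R (p * m)) + #{z ∈ R (p * m) | (p : ℤ) ∣ z.1 ∧ (p : ℤ) ∣ z.2} = 2 * #(R m) := by
  have := Fact.mk hp
  obtain ⟨a, b, hab⟩ := Nat.Prime.sq_add_sq (p := p) (by omega)
  have hab' : (a : ℤ) ^ 2 + (b : ℤ) ^ 2 = p := by exact_mod_cast hab
  have hpp : Prime (p : ℤ) := Nat.prime_iff_prime_int.1 hp
  have hA := card_A p m hp a b hab'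
  have hB := card_A p m hp a (-b) (by rw [neg_sq, hab'])
  have hpa : ∀ c : ℕ, c ^ 2 < p → c ≠ 0 → ¬ (p : ℤ) ∣ c := by
    intro c hc hc0 hd
    have := Nat.le_of_dvd (by omega) (Int.natCast_dvd_natCast.1 hd)
    nlinarith
  have ha0 : a ≠ 0 := by
    rintro rfl
    apply hp.not_isSquare
    exact ⟨b, by rw [← hab]; ring⟩
  have hb0 : b ≠ 0 := by
    rintro rfl
    apply hp.not_isSquare
    exact ⟨a, by rw [← hab]; ring⟩
  have ha := hpa a (by have := Nat.pos_of_ne_zero hb0; nlinarith) ha0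
  have hb := hpa b (by have := Nat.pos_of_ne_zero ha0; nlinarith) hb0
  have h2 : ¬ (p : ℤ) ∣ 2 := by
    intro h
    have : p ∣ 2 := by exact_mod_cast h
    have := Nat.le_of_dvd (by norm_num) this
    have := hp.two_le
    omega
  have hU : R (p * m) = {z ∈ R (p * m) | (p : ℤ) ∣ z.1 * a + z.2 * b} ∪
      {z ∈ R (p * m) | (p : ℤ) ∣ z.1 * a + z.2 * -b} := by
    rw [← filter_or, filter_true_of_mem]
    rintro ⟨x, y⟩ hz
    rw [mem_R] at hz
    push_cast at hz
    apply hpp.dvd_or_dvd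
    refine ⟨m * a ^ 2 - y ^ 2, ?_⟩
    dsimp only at hz ⊢
    linear_combination (a : ℤ) ^ 2 * hz - y ^ 2 * hab'
  have hI : {z ∈ R (p * m) | (p : ℤ) ∣ z.1 ∧ (p : ℤ) ∣ z.2} =
      {z ∈ R (p * m) | (p : ℤ) ∣ z.1 * a + z.2 * b} ∩
      {z ∈ R (p * m) | (p : ℤ) ∣ z.1 * a + z.2 * -b} := by
    rw [← filter_and]
    apply filter_congr
    rintro ⟨x, y⟩ _
    dsimp only
    constructor
    · rintro ⟨h1, h2⟩
      exact ⟨(h1.mul_right _).add (h2.mul_right _), (h1.mul_right _).add (h2.mul_right _)⟩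
    · rintro ⟨h3, h4⟩
      have h5 : (p : ℤ) ∣ 2 * (x * a) := by
        have := h3.add h4
        rwa [show x * a + y * b + (x * a + y * -b) = 2 * (x * a) by ring] at this
      have h6 : (p : ℤ) ∣ 2 * (y * b) := by
        have := h3.sub h4
        rwa [show x * a + y * b - (x * a + y * -b) = 2 * (y * b) by ring] at this
      exact ⟨((hpp.dvd_or_dvd ((hpp.dvd_or_dvd h5).resolve_left h2)).resolve_right ha),
        ((hpp.dvd_or_dvd ((hpp.dvd_or_dvd h6).resolve_left h2)).resolve_right hb)⟩
  rw [hI]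
  nth_rewrite 1 [hU]
  rw [card_union_add_card_inter, hA, hB]; ring

theorem card_two (m : ℕ) : #(R (2 * m)) = #(R m) := by
  rw [← card_A 2 m Nat.prime_two 1 1 (by norm_num), filter_true_of_mem]
  rintro ⟨x, y⟩ hz
  rw [mem_R] at hz
  push_cast at hz ⊢
  apply Int.prime_two.dvd_of_dvd_pow (n := 2)
  refine ⟨m + x * y, ?_⟩
  linear_combination hz

theorem r_one_step (p m : ℕ) (hp : p.Prime) (h : ¬ p ∣ m) :
    (#(R (p * m)) : ℤ) = (1 + ZMod.χ₄ (p : ZMod 4)) * #(R m) := by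
  rcases hp.eq_two_or_odd with rfl | ho
  · rw [card_two, show ZMod.χ₄ ((2 : ℕ) : ZMod 4) = 0 by decide]; ring
  have he : {z ∈ R (p * m) | (p : ℤ) ∣ z.1 ∧ (p : ℤ) ∣ z.2} = ∅ :=
    filter_false_of_mem (not_both p m hp h)
  rcases (show p % 4 = 1 ∨ p % 4 = 3 by omega) with h1 | h3
  · have := card_one p m hp h1
    rw [he, card_empty] at this
    rw [ZMod.χ₄_nat_one_mod_four h1]
    push_cast [← @Nat.cast_inj ℤ] at this
    linarith
  · rw [filter_true_of_mem (both_of_three p m hp h3)] at he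
    rw [ZMod.χ₄_nat_three_mod_four h3, he]; simp

theorem r_two_step (p k : ℕ) (hp : p.Prime) :
    (#(R (p * (p * k))) : ℤ) = (1 + ZMod.χ₄ (p : ZMod 4)) * #(R (p * k)) -
      ZMod.χ₄ (p : ZMod 4) * #(R k) := by
  rcases hp.eq_two_or_odd with rfl | ho
  · rw [card_two, show ZMod.χ₄ ((2 : ℕ) : ZMod 4) = 0 by decide]; ring
  have he := card_scale p k hp
  rcases (show p % 4 = 1 ∨ p % 4 = 3 by omega) with h1 | h3
  · have := card_one p (p * k) hp h1
    rw [he] at this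
    rw [ZMod.χ₄_nat_one_mod_four h1]
    push_cast [← @Nat.cast_inj ℤ] at this
    linarith
  · rw [filter_true_of_mem (both_of_three p _ hp h3)] at he
    rw [ZMod.χ₄_nat_three_mod_four h3, he]; ring

theorem R_one : #(R 1) = 4 := by decide

theorem R_zero : #(R 0) = 1 := by decide

theorem two_squares (n : ℕ) (hn : 0 < n) : (#(R n) : ℤ) = 4 * del n := by
  induction n using Nat.strong_induction_on with
  | _ n ih =>
    rcases Nat.eq_or_lt_of_le (Nat.succ_le_of_lt hn) with h | h
    · obtain rfl : n = 1 := h.symm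
      rw [R_one]; simp [del]
    obtain ⟨p, hp, m, rfl⟩ := Nat.exists_prime_and_dvd (n := n) (by omega)
    have hm : 0 < m := Nat.pos_of_mul_pos_left hn
    have hm' : m < p * m := by nlinarith [hp.two_le]
    by_cases hd : p ∣ m
    · obtain ⟨k, rfl⟩ := hd
      have hk : 0 < k := Nat.pos_of_mul_pos_left hm
      have hk' : k < p * k := by nlinarith [hp.two_le]
      rw [r_two_step p k hp, del_two_step p k hp hk, ih _ hm' hm, ih k (hk'.trans hm') hk]; ring
    · rw [r_one_step p m hp hd, del_one_step p m hp hm hd, ih m hm' hm]; ring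

end JFS
namespace JFS

open Finset

theorem card_four (n : ℕ) :
    Nat.card {v : Fin 4 → ℤ // ∑ i, (v i) ^ 2 = (n : ℤ)} =
      ∑ k ∈ antidiagonal n, #(R k.1) * #(R k.2) := by
  classical
  have key : ∀ v : Fin 4 → ℤ,
      v ∈ ((antidiagonal n).sigma (fun k => R k.1 ×ˢ R k.2)).image
        (fun s => ![s.2.1.1, s.2.1.2, s.2.2.1, s.2.2.2]) ↔ ∑ i, (v i) ^ 2 = (n : ℤ) := by
    intro v
    simp only [mem_image, mem_sigma, HasAntidiagonal.mem_antidiagonal, mem_product, mem_R, Fin.sum_univ_four]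
    constructor
    · rintro ⟨⟨⟨k, l⟩, ⟨⟨a, b⟩, ⟨c, d⟩⟩⟩, ⟨h1, h2, h3⟩, rfl⟩
      simp only [Matrix.cons_val] at *
      rw [← h1]
      push_cast
      linarith
    · intro h
      have p1 : 0 ≤ v 0 ^ 2 + v 1 ^ 2 := by positivity
      have p2 : 0 ≤ v 2 ^ 2 + v 3 ^ 2 := by positivity
      refine ⟨⟨((v 0 ^ 2 + v 1 ^ 2).toNat, (v 2 ^ 2 + v 3 ^ 2).toNat),
        ((v 0, v 1), (v 2, v 3))⟩, ⟨?_, ?_, ?_⟩, ?_⟩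
      · dsimp only; omega
      · dsimp only; omega
      · dsimp only; omega
      · ext i; fin_cases i <;> rfl
  rw [Nat.subtype_card _ key, card_image_of_injOn, card_sigma]
  · simp only [card_product]
  · rintro ⟨⟨k, l⟩, ⟨⟨a, b⟩, ⟨c, d⟩⟩⟩ h ⟨⟨k', l'⟩, ⟨⟨a', b'⟩, ⟨c', d'⟩⟩⟩ h' e
    simp only [mem_coe, mem_sigma, mem_product, mem_R] at h h'
    have e0 : a = a' := congrFun e 0
    have e1 : b = b' := congrFun e 1
    have e2 : c = c' := congrFun e 2
    have e3 : d = d' := congrFun e 3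
    subst e0 e1 e2 e3
    have f1 : k = k' := by exact_mod_cast h.2.1.symm.trans h'.2.1
    have f2 : l = l' := by exact_mod_cast h.2.2.symm.trans h'.2.2
    subst f1 f2
    rfl

theorem conv_del (n : ℕ) :
    ∑ k ∈ antidiagonal n, del k.1 * del k.2 =
      ∑ q ∈ Q n, ZMod.χ₄ (q.1.1 : ZMod 4) * ZMod.χ₄ (q.1.2 : ZMod 4) := by
  have hd : ∀ m, del m = ∑ p ∈ m.divisorsAntidiagonal, ZMod.χ₄ (p.1 : ZMod 4) := fun m =>
    (Nat.sum_divisorsAntidiagonal (fun d _ => ZMod.χ₄ (d : ZMod 4))).symm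
  simp only [hd, sum_mul_sum, ← sum_product']
  rw [sum_sigma']
  refine sum_nbij' (fun s => ((s.2.1.1, s.2.2.1), (s.2.1.2, s.2.2.2)))
    (fun q => ⟨(q.1.1 * q.2.1, q.1.2 * q.2.2), ((q.1.1, q.2.1), (q.1.2, q.2.2))⟩) ?_ ?_ ?_ ?_ ?_
  · rintro ⟨⟨k, l⟩, ⟨⟨a, x⟩, ⟨b, y⟩⟩⟩ h
    simp only [mem_sigma, HasAntidiagonal.mem_antidiagonal, mem_product, Nat.mem_divisorsAntidiagonal, mem_Q] at h ⊢
    obtain ⟨h1, ⟨rfl, h2⟩, ⟨rfl, h3⟩⟩ := h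
    simp only [ne_eq, mul_eq_zero, not_or] at h2 h3
    exact ⟨by omega, by omega, by omega, by omega, h1⟩
  · rintro ⟨⟨a, b⟩, ⟨x, y⟩⟩ h
    simp only [mem_sigma, HasAntidiagonal.mem_antidiagonal, mem_product, Nat.mem_divisorsAntidiagonal, mem_Q] at h ⊢
    obtain ⟨ha, hb, hx, hy, h⟩ := h
    exact ⟨h, ⟨trivial, by positivity⟩, ⟨trivial, by positivity⟩⟩
  · rintro ⟨⟨k, l⟩, ⟨⟨a, x⟩, ⟨b, y⟩⟩⟩ h
    simp only [mem_sigma, HasAntidiagonal.mem_antidiagonal, mem_product, Nat.mem_divisorsAntidiagonal] at h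
    obtain ⟨h1, ⟨rfl, h2⟩, ⟨rfl, h3⟩⟩ := h
    rfl
  · rintro ⟨⟨a, b⟩, ⟨x, y⟩⟩ h
    rfl
  · rintro ⟨⟨k, l⟩, ⟨⟨a, x⟩, ⟨b, y⟩⟩⟩ h
    rfl

theorem r_eq (k : ℕ) : (#(R k) : ℤ) = 4 * del k + if k = 0 then 1 else 0 := by
  rcases Nat.eq_zero_or_pos k with rfl | h
  · simp [R_zero, del]
  · rw [two_squares k h, if_neg h.ne', add_zero]

theorem conv_r (n : ℕ) (hn : 0 < n) :
    ∑ k ∈ antidiagonal n, (#(R k.1) : ℤ) * #(R k.2) =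
      16 * ∑ k ∈ antidiagonal n, del k.1 * del k.2 + 8 * del n := by
  have h1 : ∑ k ∈ antidiagonal n, (if k.1 = 0 then del k.2 else 0) = del n := by
    rw [Finset.Nat.sum_antidiagonal_eq_sum_range_succ (fun i j => if i = 0 then del j else 0)]
    simp
  have h2 : ∑ k ∈ antidiagonal n, (if k.2 = 0 then del k.1 else 0) = del n := by
    rw [← h1, ← Finset.Nat.sum_antidiagonal_swap]
    rfl
  have h3 : ∀ k ∈ antidiagonal n, (#(R k.1) : ℤ) * #(R k.2) =
      16 * (del k.1 * del k.2) + 4 * (if k.1 = 0 then del k.2 else 0) +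
        4 * (if k.2 = 0 then del k.1 else 0) := by
    rintro ⟨k, l⟩ h
    rw [HasAntidiagonal.mem_antidiagonal] at h
    dsimp only at h ⊢
    rw [r_eq, r_eq]
    split_ifs
    · omega
    · ring
    · ring
    · ring
  rw [sum_congr rfl h3, sum_add_distrib, sum_add_distrib, ← mul_sum, ← mul_sum, ← mul_sum, h1, h2]
  ring

/-- Indicator of divisibility by `4`. -/
def F (x : ℤ) : ℤ := if (x : ZMod 4) = 0 then 1 else 0

theorem F_neg (x : ℤ) : F (-x) = F x := by simp [F]

theorem F_nat (d : ℕ) : F d = if 4 ∣ d then 1 else 0 := by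
  simp only [F, Int.cast_natCast, ZMod.natCast_eq_zero_iff]

theorem chi_mul (a b : ℕ) : ZMod.χ₄ (a : ZMod 4) * ZMod.χ₄ (b : ZMod 4) =
    F ((a : ℤ) - b) - F ((a : ℤ) + b) := by
  have : ∀ a b : ZMod 4, ZMod.χ₄ a * ZMod.χ₄ b =
    (if a - b = 0 then 1 else 0) - (if a + b = 0 then 1 else 0) := by decide
  simp only [F, Int.cast_sub, Int.cast_add, Int.cast_natCast]
  exact this _ _

theorem sum_F (d : ℕ) (hd : 1 ≤ d) :
    4 * ∑ l ∈ Ico 1 d, F l = (d : ℤ) - 2 - 2 * F d + ZMod.χ₄ (d : ZMod 4) := by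
  induction d, hd using Nat.le_induction with
  | base => decide
  | succ d hd ih =>
    rw [sum_Ico_succ_top hd, mul_add, ih]
    have : ∀ a : ZMod 4, 2 * (if a = 0 then (1 : ℤ) else 0) + 2 * (if a + 1 = 0 then 1 else 0) =
      1 + ZMod.χ₄ (a + 1) - ZMod.χ₄ a := by decide
    have := this d
    simp only [F, Int.cast_natCast]
    push_cast
    linarith

theorem sum_quot (n : ℕ) (hn : 0 < n) :
    4 * ∑ d ∈ n.divisors, ((n / d : ℕ) : ℤ) * F d = ∑ d ∈ n.divisors, (d : ℤ) * F d := by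
  rw [← Nat.sum_div_divisors n (fun d => ((n / d : ℕ) : ℤ) * F d), mul_sum]
  simp only [F_nat, mul_ite, mul_one, mul_zero, ← sum_filter]
  refine sum_nbij (fun d => 4 * d) ?_ ?_ ?_ ?_
  · intro d hd
    simp only [mem_filter, Nat.mem_divisors] at hd ⊢
    obtain ⟨⟨h1, _⟩, e, he⟩ := hd
    refine ⟨⟨⟨e, ?_⟩, hn.ne'⟩, dvd_mul_right _ _⟩
    rw [← Nat.mul_div_cancel' h1, he]; ring
  · intro d _ e _ h
    simpa using h
  · intro d hd
    simp only [coe_filter, Nat.mem_divisors, Set.mem_ofPred_eq] at hd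
    obtain ⟨⟨⟨e, rfl⟩, _⟩, f, rfl⟩ := hd
    have hf : 0 < f := by
      rcases Nat.eq_zero_or_pos f with rfl | h
      · simp at hn
      · exact h
    refine ⟨f, ?_, rfl⟩
    simp only [coe_filter, Nat.mem_divisors, Set.mem_ofPred_eq]
    refine ⟨⟨⟨4 * e, by ring⟩, hn.ne'⟩, e, ?_⟩
    rw [show 4 * f * e = f * (4 * e) by ring, Nat.mul_div_cancel_left _ hf]
  · intro d hd
    simp only [mem_filter, Nat.mem_divisors] at hd
    rw [Nat.div_div_self hd.1.1 hn.ne']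
    push_cast
    rfl

end JFS

/-- Jacobi's four-square theorem: for every positive integer `n`, the number of ordered
representations of `n` as a sum of four integer squares equals `8` times the sum of the
divisors `d` of `n` with `4 ∤ d`. -/
theorem jacobi_four_squares (n : ℕ) (hn : 0 < n) :
    Nat.card {v : Fin 4 → ℤ // ∑ i, (v i) ^ 2 = (n : ℤ)} =
      8 * ∑ d ∈ n.divisors.filter (fun d => ¬ (4 ∣ d)), d := by
  rw [JFS.card_four]
  have h1 := JFS.conv_r n hn
  have h2 := (JFS.conv_del n).trans
    ((Finset.sum_congr rfl (fun q _ => JFS.chi_mul q.1.1 q.1.2)).trans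
      (JFS.liouville n hn JFS.F JFS.F_neg))
  have h3 := JFS.sum_quot n hn
  have h4 : ∑ d ∈ n.divisors, (4 * ∑ l ∈ Finset.Ico 1 d, JFS.F l) =
      ∑ d ∈ n.divisors, ((d : ℤ) - 2 - 2 * JFS.F d + ZMod.χ₄ (d : ZMod 4)) :=
    Finset.sum_congr rfl fun d hd => JFS.sum_F d (Nat.pos_of_mem_divisors hd)
  have h5 : ((∑ d ∈ n.divisors.filter (fun d => ¬ (4 ∣ d)), d : ℕ) : ℤ) =
      ∑ d ∈ n.divisors, ((d : ℤ) - d * JFS.F d) := by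
    rw [Finset.sum_filter]
    push_cast
    refine Finset.sum_congr rfl fun d _ => ?_
    rw [JFS.F_nat]
    split_ifs <;> simp
  have h6 : JFS.F 0 = 1 := by decide
  apply Nat.cast_injective (R := ℤ)
  rw [Nat.cast_mul, h5]
  push_cast
  rw [h1, h2, h6]
  rw [JFS.del]
  simp only [Finset.sum_add_distrib, Finset.sum_sub_distrib, ← Finset.mul_sum, mul_assoc,
    sub_mul, mul_sub, one_mul, mul_one] at *
  have h7 : ∑ d ∈ n.divisors, (2 : ℤ) = 2 * ∑ d ∈ n.divisors, (1 : ℤ) := by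
    rw [Finset.mul_sum]; simp
  linarith
end

section
/- For every positive integer n, r_6(n) = 16 · Σ_{d | n} χ(d) · (n/d)² − 4 · Σ_{d | n} χ(d) · d², where χ is the nonprincipal Dirichlet character modulo 4. -/
namespace SixSq

/-- The character mod 4 on integers. -/
def X (k : ℤ) : ℤ := if k % 4 = 1 then 1 else if k % 4 = 3 then -1 else 0

lemma X_neg (k : ℤ) : X (-k) = - X k := by
  unfold X
  split_ifs <;> omega

lemma X_congr {a b : ℤ} (h : a % 4 = b % 4) : X a = X b := by
  unfold X
  rw [h]

lemma X_zero : X 0 = 0 := by decide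

/-- The polynomial weight. -/
def P (x y : ℤ) : ℤ := 4 * x * y ^ 3 - x ^ 3 * y

/-- Triples `(u, d, e)` with `u ^ 2 + d * e = n`, `d, e > 0`, in a box. -/
noncomputable def A (N n : ℤ) : Finset (ℤ × ℤ × ℤ) :=
  (Finset.Icc (-N) N ×ˢ Finset.Icc 1 N ×ˢ Finset.Icc 1 N).filter
    (fun t => t.1 ^ 2 + t.2.1 * t.2.2 = n)

lemma mem_A {N n : ℤ} (h : n ≤ N) (t : ℤ × ℤ × ℤ) :
    t ∈ A N n ↔ 0 < t.2.1 ∧ 0 < t.2.2 ∧ t.1 ^ 2 + t.2.1 * t.2.2 = n := by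
  obtain ⟨u, d, e⟩ := t
  simp only [A, Finset.mem_filter, Finset.mem_product, Finset.mem_Icc]
  constructor
  · rintro ⟨⟨_, ⟨h1, _⟩, h2, _⟩, h3⟩
    exact ⟨by omega, by omega, h3⟩
  · rintro ⟨h1, h2, h3⟩
    have hu := sq_nonneg u
    have hde : 0 < d * e := mul_pos h1 h2
    refine ⟨⟨⟨by nlinarith, by nlinarith⟩, ⟨by omega, by nlinarith⟩, by omega, by nlinarith⟩, h3⟩

/-- left weight -/
def w (t : ℤ × ℤ × ℤ) : ℤ := X t.2.2 * P (t.2.2 - 2 * t.1) (t.1 + t.2.1)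

/-- right weight -/
def H (t : ℤ × ℤ × ℤ) : ℤ := X (t.2.2 + 2 * t.1 - t.2.1) * P (t.2.1 + t.2.2) t.1

lemma sum_H {N n : ℤ} (h : n ≤ N) : ∑ t ∈ A N n, H t = 0 := by
  have key : ∑ t ∈ A N n, H t = ∑ t ∈ A N n, - H t := by
    refine Finset.sum_nbij' (fun t => (-t.1, t.2)) (fun t => (-t.1, t.2)) ?_ ?_ ?_ ?_ ?_
    · intro t ht
      rw [mem_A h] at ht ⊢
      simpa using ht
    · intro t ht
      rw [mem_A h] at ht ⊢
      simpa using ht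
    · intro t _; simp
    · intro t _; simp
    · intro t _
      simp only [H, P]
      rw [X_congr (show (t.2.2 + 2 * t.1 - t.2.1) % 4 = (t.2.2 + 2 * -t.1 - t.2.1) % 4 by omega)]
      ring
  rw [Finset.sum_neg_distrib] at key
  omega

lemma sum_H_pos {N n : ℤ} (h : n ≤ N) :
    ∑ t ∈ (A N n).filter (fun t => 0 < 2 * t.1 + t.2.2 - t.2.1), H t = 0 := by
  have h1 := Finset.sum_filter_add_sum_filter_not (A N n)
    (fun t => 0 < 2 * t.1 + t.2.2 - t.2.1) H
  have h2 : ∑ t ∈ (A N n).filter (fun t => ¬ 0 < 2 * t.1 + t.2.2 - t.2.1), H t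
      = ∑ t ∈ (A N n).filter (fun t => 2 * t.1 + t.2.2 - t.2.1 < 0), H t := by
    symm
    apply Finset.sum_subset
    · intro t ht
      simp only [Finset.mem_filter] at ht ⊢
      exact ⟨ht.1, by omega⟩
    · intro t ht ht'
      simp only [Finset.mem_filter] at ht ht'
      have : t.2.2 + 2 * t.1 - t.2.1 = 0 := by
        by_contra hne
        exact ht' ⟨ht.1, by omega⟩
      simp [H, this, X_zero]
  have h3 : ∑ t ∈ (A N n).filter (fun t => 2 * t.1 + t.2.2 - t.2.1 < 0), H t
      = ∑ t ∈ (A N n).filter (fun t => 0 < 2 * t.1 + t.2.2 - t.2.1), H t := by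
    refine Finset.sum_nbij' (fun t => (-t.1, t.2.2, t.2.1)) (fun t => (-t.1, t.2.2, t.2.1))
      ?_ ?_ ?_ ?_ ?_
    · intro t ht
      rw [Finset.mem_filter, mem_A h] at ht ⊢
      obtain ⟨⟨a, b, c⟩, d⟩ := ht
      exact ⟨⟨b, a, by simp only; linarith⟩, by simp only; omega⟩
    · intro t ht
      rw [Finset.mem_filter, mem_A h] at ht ⊢
      obtain ⟨⟨a, b, c⟩, d⟩ := ht
      exact ⟨⟨b, a, by simp only; linarith⟩, by simp only; omega⟩
    · intro t _; simp
    · intro t _; simp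
    · intro t _
      simp only [H, P]
      rw [show t.2.1 + 2 * -t.1 - t.2.2 = - (t.2.2 + 2 * t.1 - t.2.1) by ring, X_neg]
      ring
  rw [h2, h3, sum_H h] at h1
  omega

lemma sum_w_neg {N n : ℤ} (h : n ≤ N) :
    ∑ t ∈ (A N n).filter (fun t => t.2.1 + 2 * t.1 - t.2.2 < 0), w t = 0 := by
  refine Eq.trans ?_ (sum_H_pos h)
  refine Finset.sum_nbij' (fun t => (t.1 + t.2.1, t.2.1, t.2.2 - 2 * t.1 - t.2.1))
    (fun t => (t.1 - t.2.1, t.2.1, t.2.2 + 2 * t.1 - t.2.1)) ?_ ?_ ?_ ?_ ?_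
  · intro t ht
    rw [Finset.mem_filter, mem_A h] at ht ⊢
    obtain ⟨⟨a, b, c⟩, d⟩ := ht
    exact ⟨⟨a, by simp only; omega, by simp only; linarith⟩, by simp only; omega⟩
  · intro t ht
    rw [Finset.mem_filter, mem_A h] at ht ⊢
    obtain ⟨⟨a, b, c⟩, d⟩ := ht
    exact ⟨⟨a, by simp only; omega, by simp only; linarith⟩, by simp only; omega⟩
  · rintro ⟨u, d, e⟩ _
    ext <;> simp only <;> ring
  · rintro ⟨u, d, e⟩ _
    ext <;> simp only <;> ring
  · rintro ⟨u, d, e⟩ _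
    simp only [H, w]
    congr 2 <;> ring

lemma sum_w_pos {N n : ℤ} (h : n ≤ N) :
    ∑ t ∈ (A N n).filter (fun t => 0 < t.2.1 + 2 * t.1 - t.2.2), w t = 0 := by
  have key : ∑ t ∈ (A N n).filter (fun t => 0 < t.2.1 + 2 * t.1 - t.2.2), w t
      = ∑ t ∈ (A N n).filter (fun t => 0 < t.2.1 + 2 * t.1 - t.2.2), - w t := by
    refine Finset.sum_nbij' (fun t => (t.2.2 - t.1, t.2.1 + 2 * t.1 - t.2.2, t.2.2))
      (fun t => (t.2.2 - t.1, t.2.1 + 2 * t.1 - t.2.2, t.2.2)) ?_ ?_ ?_ ?_ ?_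
    · intro t ht
      rw [Finset.mem_filter, mem_A h] at ht ⊢
      obtain ⟨⟨a, b, c⟩, d⟩ := ht
      exact ⟨⟨d, b, by simp only; linarith⟩, by simp only; omega⟩
    · intro t ht
      rw [Finset.mem_filter, mem_A h] at ht ⊢
      obtain ⟨⟨a, b, c⟩, d⟩ := ht
      exact ⟨⟨d, b, by simp only; linarith⟩, by simp only; omega⟩
    · rintro ⟨u, d, e⟩ _
      ext <;> simp only <;> ring
    · rintro ⟨u, d, e⟩ _
      ext <;> simp only <;> ring
    · rintro ⟨u, d, e⟩ _
      simp only [w, P]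
      ring
  rw [Finset.sum_neg_distrib] at key
  omega

lemma sum_w_split {N n : ℤ} (h : n ≤ N) :
    ∑ t ∈ A N n, w t = ∑ t ∈ (A N n).filter (fun t => t.2.1 + 2 * t.1 - t.2.2 = 0), w t := by
  have h1 := Finset.sum_filter_add_sum_filter_not (A N n)
    (fun t => t.2.1 + 2 * t.1 - t.2.2 = 0) w
  have h2 := Finset.sum_filter_add_sum_filter_not
    ((A N n).filter (fun t => ¬ t.2.1 + 2 * t.1 - t.2.2 = 0))
    (fun t => 0 < t.2.1 + 2 * t.1 - t.2.2) w
  rw [Finset.filter_filter, Finset.filter_filter] at h2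
  rw [show (A N n).filter (fun t => ¬ t.2.1 + 2 * t.1 - t.2.2 = 0 ∧ 0 < t.2.1 + 2 * t.1 - t.2.2)
      = (A N n).filter (fun t => 0 < t.2.1 + 2 * t.1 - t.2.2) from
        Finset.filter_congr (fun t _ => by omega),
    show (A N n).filter (fun t => ¬ t.2.1 + 2 * t.1 - t.2.2 = 0 ∧ ¬ 0 < t.2.1 + 2 * t.1 - t.2.2)
      = (A N n).filter (fun t => t.2.1 + 2 * t.1 - t.2.2 < 0) from
        Finset.filter_congr (fun t _ => by omega), sum_w_pos h, sum_w_neg h] at h2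
  omega

lemma alt1 (l : ℕ) : ∑ i ∈ Finset.range l, (-1 : ℤ) ^ i * (2 * (i : ℤ) + 1) 
    = (-1 : ℤ) ^ (l + 1) * (l : ℤ) := by
  induction l with
  | zero => simp
  | succ k ih => rw [Finset.sum_range_succ, ih]; push_cast; ring

lemma alt3 (l : ℕ) : ∑ i ∈ Finset.range l, (-1 : ℤ) ^ i * (2 * (i : ℤ) + 1) ^ 3
    = (-1 : ℤ) ^ (l + 1) * (4 * (l : ℤ) ^ 3 - 3 * (l : ℤ)) := by
  induction l with
  | zero => simp
  | succ k ih => rw [Finset.sum_range_succ, ih]; push_cast; ring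

lemma X_odd (i : ℕ) : X (2 * i + 1) = (-1) ^ i := by
  rcases Nat.even_or_odd i with hi | hi
  · rw [hi.neg_one_pow]
    obtain ⟨k, rfl⟩ := hi
    unfold X
    rw [if_pos (by push_cast; omega)]
  · rw [hi.neg_one_pow]
    obtain ⟨k, rfl⟩ := hi
    unfold X
    rw [if_neg (by push_cast; omega), if_pos (by push_cast; omega)]

lemma X_refl (l i : ℕ) : X (2 * l - (2 * i + 1)) = (-1) ^ (l + 1) * (-1) ^ i := by
  rw [← pow_add, ← X_odd]
  apply X_congr
  push_cast
  omega

lemma sum_w_sq {N : ℤ} (l : ℕ) (hl : 0 < l) (h : (l : ℤ) ^ 2 ≤ N) :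
    ∑ t ∈ A N ((l : ℤ) ^ 2), w t = 3 * (l : ℤ) ^ 2 := by
  rw [sum_w_split h]
  have h1 : ∑ i ∈ Finset.range l, X (2 * l - (2 * i + 1)) * P (2 * i + 1) l
      = ∑ t ∈ (A N ((l : ℤ) ^ 2)).filter (fun t => t.2.1 + 2 * t.1 - t.2.2 = 0), w t := by
    apply Finset.sum_of_injOn
      (fun i : ℕ => ((l : ℤ) - (2 * i + 1), (2 * i + 1 : ℤ), (2 * l - (2 * i + 1) : ℤ)))
    · intro i _ j _ hij
      simp only [Prod.mk.injEq] at hij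
      omega
    · intro i hi
      simp only [Finset.coe_range, Set.mem_Iio] at hi
      rw [Finset.mem_coe, Finset.mem_filter, mem_A h]
      refine ⟨⟨?_, ?_, ?_⟩, ?_⟩
      · simp only; omega
      · simp only; omega
      · simp only; ring
      · simp only; ring
    · rintro ⟨u, d, e⟩ ht hn
      rw [Finset.mem_filter, mem_A h] at ht
      simp only at ht
      obtain ⟨⟨hd, he, hs⟩, h0⟩ := ht
      have hul : u + d = l := by
        have : (u + d) ^ 2 = (l : ℤ) ^ 2 := by
          rw [← hs, show e = d + 2 * u by omega]; ring
        rcases sq_eq_sq_iff_eq_or_eq_neg.mp this with h | h <;> omega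
      have hX : X e = 0 := by
        by_contra hX
        apply hn
        have hodd : e % 2 = 1 := by
          by_contra h2
          apply hX
          unfold X
          rw [if_neg (by omega), if_neg (by omega)]
        refine ⟨((d - 1) / 2).toNat, ?_, ?_⟩
        · simp only [Finset.coe_range, Set.mem_Iio]; omega
        · simp only [Prod.mk.injEq]; omega
      simp [w, hX]
    · intro i _
      simp only [w]
      congr 2 <;> ring
  rw [← h1]
  have h2 : ∀ i ∈ Finset.range l, X (2 * l - (2 * i + 1)) * P (2 * i + 1) l
      = (-1) ^ (l + 1) * (4 * (l : ℤ) ^ 3 * ((-1 : ℤ) ^ i * (2 * i + 1))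
        - l * ((-1 : ℤ) ^ i * (2 * i + 1) ^ 3)) := by
    intro i _
    rw [X_refl, P]
    ring
  rw [Finset.sum_congr rfl h2, ← Finset.mul_sum, Finset.sum_sub_distrib, ← Finset.mul_sum,
    ← Finset.mul_sum, alt1, alt3]
  have h3 : ((-1 : ℤ) ^ (l + 1)) * (-1) ^ (l + 1) = 1 := by
    rw [← mul_pow]; simp
  linear_combination (3 * (l : ℤ) ^ 2) * h3

lemma sum_w_nonsq {N n : ℤ} (h : n ≤ N) (hns : ¬ IsSquare n) :
    ∑ t ∈ A N n, w t = 0 := by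
  rw [sum_w_split h, Finset.filter_false_of_mem, Finset.sum_empty]
  rintro ⟨u, d, e⟩ ht h0
  rw [mem_A h] at ht
  simp only at ht h0
  apply hns
  refine ⟨u + d, ?_⟩
  rw [← ht.2.2, show e = d + 2 * u by omega]
  ring

/-- target weight -/
def g (t : ℤ × ℤ × ℤ) : ℤ :=
  (t.2.1 * t.2.2 - 6 * t.1 ^ 2) * (X t.2.2 * (4 * t.2.1 ^ 2 - t.2.2 ^ 2))

lemma sum_g {N n : ℤ} (h : n ≤ N) : ∑ t ∈ A N n, g t = ∑ t ∈ A N n, w t := by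
  have h1 : ∑ t ∈ A N n, w t = ∑ t ∈ A N n, w (-t.1, t.2) := by
    refine Finset.sum_nbij' (fun t => (-t.1, t.2)) (fun t => (-t.1, t.2)) ?_ ?_ ?_ ?_ ?_
    · intro t ht
      rw [mem_A h] at ht ⊢
      simpa using ht
    · intro t ht
      rw [mem_A h] at ht ⊢
      simpa using ht
    · intro t _; simp
    · intro t _; simp
    · intro t _; simp
  have h2 : 2 * ∑ t ∈ A N n, g t = ∑ t ∈ A N n, w t + ∑ t ∈ A N n, w (-t.1, t.2) := by
    rw [Finset.mul_sum, ← Finset.sum_add_distrib]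
    apply Finset.sum_congr rfl
    rintro ⟨u, d, e⟩ _
    simp only [g, w, P]
    ring
  omega

/-- divisor sum -/
noncomputable def D (N m : ℤ) : ℤ :=
  ∑ p ∈ (Finset.Icc 1 N ×ˢ Finset.Icc 1 N).filter (fun p : ℤ × ℤ => p.1 * p.2 = m),
    X p.2 * (4 * p.1 ^ 2 - p.2 ^ 2)

/-- the candidate -/
noncomputable def F (N m : ℤ) : ℤ := (if m = 0 then 1 else 0) + 4 * D N m

lemma F_neg {N m : ℤ} (hm : m < 0) : F N m = 0 := by
  unfold F D
  rw [if_neg hm.ne, Finset.filter_false_of_mem]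
  · simp
  · rintro ⟨a, b⟩ hp hab
    simp only [Finset.mem_product, Finset.mem_Icc] at hp hab
    nlinarith

lemma F_zero {N : ℤ} : F N 0 = 1 := by
  unfold F D
  rw [if_pos rfl, Finset.filter_false_of_mem]
  · simp
  · rintro ⟨a, b⟩ hp hab
    simp only [Finset.mem_product, Finset.mem_Icc] at hp hab
    nlinarith

lemma D_rec {N n : ℤ} :
    ∑ u ∈ Finset.Icc (-N) N, (n - 7 * u ^ 2) * D N (n - u ^ 2) = ∑ t ∈ A N n, g t := by
  unfold D A
  rw [Finset.sum_filter, Finset.sum_product]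
  apply Finset.sum_congr rfl
  intro u _
  rw [Finset.sum_filter, Finset.mul_sum]
  apply Finset.sum_congr rfl
  rintro ⟨a, b⟩ _
  simp only [g]
  by_cases hab : a * b = n - u ^ 2
  · rw [if_pos hab, if_pos (by rw [hab]; ring), hab]
    ring
  · rw [if_neg hab, if_neg (fun h => hab (by rw [← h]; ring))]
    simp

lemma F_rec {N n : ℤ} (h : n ≤ N) (hn : 0 < n) :
    ∑ u ∈ Finset.Icc (-N) N, (n - 7 * u ^ 2) * F N (n - u ^ 2) = 0 := by
  have h1 : ∑ u ∈ Finset.Icc (-N) N, (n - 7 * u ^ 2) * F N (n - u ^ 2)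
      = ∑ u ∈ Finset.Icc (-N) N, (if n - u ^ 2 = 0 then n - 7 * u ^ 2 else 0)
        + 4 * ∑ t ∈ A N n, g t := by
    rw [← D_rec, Finset.mul_sum, ← Finset.sum_add_distrib]
    apply Finset.sum_congr rfl
    intro u _
    unfold F
    split_ifs <;> ring
  rw [h1, sum_g h]
  by_cases hs : IsSquare n
  · obtain ⟨r, hr⟩ := hs
    obtain ⟨l, hl⟩ : ∃ l : ℕ, n = (l : ℤ) ^ 2 := ⟨r.natAbs, by rw [Int.natAbs_sq, hr]; ring⟩
    have hl0 : 0 < l := by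
      rcases Nat.eq_zero_or_pos l with h0 | h0
      · subst h0; simp at hl; omega
      · exact h0
    subst hl
    rw [sum_w_sq l hl0 h, ← Finset.sum_filter]
    have : (Finset.Icc (-N) N).filter (fun u => (l : ℤ) ^ 2 - u ^ 2 = 0) = {(l : ℤ), -(l : ℤ)} := by
      ext u
      simp only [Finset.mem_filter, Finset.mem_Icc, Finset.mem_insert, Finset.mem_singleton]
      constructor
      · rintro ⟨_, h2⟩
        exact sq_eq_sq_iff_eq_or_eq_neg.mp (by linarith)
      · have : (l : ℤ) ≤ N := by nlinarith
        rintro (rfl | rfl)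
        · exact ⟨by omega, by ring⟩
        · exact ⟨by omega, by ring⟩
    rw [this, Finset.sum_pair (by omega)]
    ring
  · rw [sum_w_nonsq h hs, Finset.sum_eq_zero]
    · ring
    · intro u _
      rw [if_neg]
      intro h0
      exact hs ⟨u, by linarith⟩

/-- Representations by `s` squares, in a box. -/
noncomputable def R (N : ℤ) (s : ℕ) (m : ℤ) : Finset (Fin s → ℤ) :=
  (Fintype.piFinset (fun _ => Finset.Icc (-N) N)).filter (fun v => ∑ i, v i ^ 2 = m)

lemma mem_R {N m : ℤ} {s : ℕ} (h : m ≤ N) (v : Fin s → ℤ) : v ∈ R N s m ↔ ∑ i, v i ^ 2 = m := by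
  simp only [R, Finset.mem_filter, Fintype.mem_piFinset, Finset.mem_Icc, and_iff_right_iff_imp]
  intro hv i
  have h1 : v i ^ 2 ≤ ∑ i, v i ^ 2 :=
    Finset.single_le_sum (f := fun i => v i ^ 2) (fun i _ => sq_nonneg _) (Finset.mem_univ i)
  constructor <;> nlinarith

lemma sum_R_succ {N n : ℤ} (h : n ≤ N) (s : ℕ) (q : ℤ → ℤ) :
    ∑ v ∈ R N (s + 1) n, q (v 0)
      = ∑ u ∈ Finset.Icc (-N) N, q u * ((R N s (n - u ^ 2)).card : ℤ) := by
  have h1 : ∀ u ∈ Finset.Icc (-N) N, q u * ((R N s (n - u ^ 2)).card : ℤ)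
      = ∑ v ∈ R N s (n - u ^ 2), q u := by
    intro u _
    rw [Finset.sum_const, nsmul_eq_mul, mul_comm]
  rw [Finset.sum_congr rfl h1, Finset.sum_sigma']
  have hle : ∀ u : ℤ, n - u ^ 2 ≤ N := fun u => by nlinarith [sq_nonneg u]
  refine Finset.sum_nbij' (fun v => ⟨v 0, Fin.tail v⟩) (fun p => Fin.cons p.1 p.2) ?_ ?_ ?_ ?_ ?_
  · intro v hv
    have hv' := hv
    rw [mem_R h, Fin.sum_univ_succ] at hv
    rw [Finset.mem_sigma]
    refine ⟨?_, ?_⟩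
    · simp only [R, Finset.mem_filter, Fintype.mem_piFinset] at hv'
      exact hv'.1 0
    · simp only
      rw [mem_R (hle _)]
      simp only [Fin.tail]
      linarith
  · rintro ⟨u, v⟩ hv
    rw [Finset.mem_sigma] at hv
    simp only at hv
    rw [mem_R (hle _)] at hv
    rw [mem_R h, Fin.sum_univ_succ]
    simp only [Fin.cons_zero, Fin.cons_succ]
    linarith [hv.2]
  · intro v _
    simp
  · rintro ⟨u, v⟩ _
    simp
  · intro v _
    rfl

lemma sum_R_perm {N n : ℤ} (h : n ≤ N) (s : ℕ) (i : Fin (s + 1)) :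
    ∑ v ∈ R N (s + 1) n, v i ^ 2 = ∑ v ∈ R N (s + 1) n, v 0 ^ 2 := by
  have hm : ∀ v ∈ R N (s + 1) n, v ∘ Equiv.swap 0 i ∈ R N (s + 1) n := by
    intro v hv
    rw [mem_R h] at hv ⊢
    rw [← hv]
    exact Equiv.sum_comp (Equiv.swap 0 i) (fun j => v j ^ 2)
  refine Finset.sum_nbij' (fun v => v ∘ Equiv.swap 0 i) (fun v => v ∘ Equiv.swap 0 i) hm hm ?_ ?_ ?_
  · intro v _
    ext j; simp
  · intro v _
    ext j; simp
  · intro v _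
    simp

lemma R_rec {N n : ℤ} (h : n ≤ N) (s : ℕ) :
    ∑ u ∈ Finset.Icc (-N) N, (n - (s + 1) * u ^ 2) * ((R N s (n - u ^ 2)).card : ℤ) = 0 := by
  rw [← sum_R_succ h s (fun u => n - (s + 1) * u ^ 2), Finset.sum_sub_distrib, ← Finset.mul_sum]
  have h1 : ∑ v ∈ R N (s + 1) n, n = ∑ v ∈ R N (s + 1) n, ∑ i, v i ^ 2 :=
    Finset.sum_congr rfl (fun v hv => ((mem_R h v).mp hv).symm)
  rw [h1, Finset.sum_comm, Finset.sum_congr rfl (fun i _ => sum_R_perm h s i)]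
  simp

lemma main {N : ℤ} (m : ℕ) (h : (m : ℤ) ≤ N) : ((R N 6 m).card : ℤ) = F N m := by
  induction m using Nat.strong_induction_on with
  | _ m ih =>
  rcases Nat.eq_zero_or_pos m with rfl | hm
  · have : R N 6 ((0 : ℕ) : ℤ) = {0} := by
      ext v
      rw [mem_R h, Finset.mem_singleton]
      constructor
      · intro hv
        ext i
        rw [Nat.cast_zero, Finset.sum_eq_zero_iff_of_nonneg (fun i _ => sq_nonneg _)] at hv
        simpa using hv i (Finset.mem_univ i)
      · rintro rfl; simp
    rw [this, Nat.cast_zero, F_zero]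
    simp
  · have h1 := R_rec h 6
    have h2 := F_rec h (by exact_mod_cast hm)
    have h0 : (0 : ℤ) ∈ Finset.Icc (-N) N := by
      rw [Finset.mem_Icc]; omega
    rw [← Finset.add_sum_erase _ _ h0] at h1 h2
    have h3 : ∀ u ∈ (Finset.Icc (-N) N).erase 0,
        ((m : ℤ) - ((6 : ℕ) + 1) * u ^ 2) * ((R N 6 (m - u ^ 2)).card : ℤ)
        = (m - 7 * u ^ 2) * F N (m - u ^ 2) := by
      intro u hu
      have hu0 : u ≠ 0 := Finset.ne_of_mem_erase hu
      have hu2 : 0 < u ^ 2 := by positivity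
      have : ((R N 6 (m - u ^ 2)).card : ℤ) = F N (m - u ^ 2) := by
        rcases lt_or_ge ((m : ℤ) - u ^ 2) 0 with hlt | hge
        · rw [F_neg hlt]
          rw [Finset.card_eq_zero.mpr, Nat.cast_zero]
          rw [Finset.eq_empty_iff_forall_notMem]
          intro v hv
          rw [mem_R (by omega)] at hv
          have : 0 ≤ ∑ i, v i ^ 2 := Finset.sum_nonneg (fun i _ => sq_nonneg _)
          omega
        · obtain ⟨k, hk⟩ := Int.eq_ofNat_of_zero_le hge
          rw [hk]
          exact ih k (by omega) (by omega)
      rw [this]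
      push_cast
      ring
    rw [Finset.sum_congr rfl h3] at h1
    have h4 : (m : ℤ) * ((R N 6 m).card : ℤ) = m * F N m := by
      simp only [ne_eq, OfNat.ofNat_ne_zero, not_false_eq_true, zero_pow, mul_zero, sub_zero]
        at h1 h2
      linarith
    exact mul_left_cancel₀ (by exact_mod_cast hm.ne') h4

lemma D_eq (n : ℕ) (hn : 0 < n) :
    D n n = ∑ p ∈ n.divisorsAntidiagonal, X p.1 * (4 * (p.2 : ℤ) ^ 2 - (p.1 : ℤ) ^ 2) := by
  unfold D
  symm
  refine Finset.sum_nbij' (fun p => ((p.2 : ℤ), (p.1 : ℤ))) (fun p => (p.2.toNat, p.1.toNat))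
    ?_ ?_ ?_ ?_ ?_
  · rintro ⟨a, b⟩ hp
    rw [Nat.mem_divisorsAntidiagonal] at hp
    obtain ⟨hab, _⟩ := hp
    simp only at hab
    have ha : 0 < a := Nat.pos_of_ne_zero (by rintro rfl; omega)
    have hb : 0 < b := Nat.pos_of_ne_zero (by rintro rfl; omega)
    simp only [Finset.mem_filter, Finset.mem_product, Finset.mem_Icc]
    refine ⟨⟨⟨by omega, ?_⟩, by omega, ?_⟩, ?_⟩
    · rw [← hab]; exact_mod_cast Nat.le_mul_of_pos_left b ha
    · rw [← hab]; exact_mod_cast Nat.le_mul_of_pos_right a hb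
    · rw [← hab]; push_cast; ring
  · rintro ⟨a, b⟩ hp
    simp only [Finset.mem_filter, Finset.mem_product, Finset.mem_Icc] at hp
    rw [Nat.mem_divisorsAntidiagonal]
    refine ⟨?_, hn.ne'⟩
    obtain ⟨a, rfl⟩ := Int.eq_ofNat_of_zero_le (show 0 ≤ a by omega)
    obtain ⟨b, rfl⟩ := Int.eq_ofNat_of_zero_le (show 0 ≤ b by omega)
    simp only [Int.toNat_natCast]
    rw [mul_comm]
    exact_mod_cast hp.2
  · rintro ⟨a, b⟩ _
    simp
  · rintro ⟨a, b⟩ hp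
    simp only [Finset.mem_filter, Finset.mem_product, Finset.mem_Icc] at hp
    simp only [Prod.mk.injEq]
    omega
  · rintro ⟨a, b⟩ _
    rfl

end SixSq

/-- The six-squares theorem: `r_6(n) = 16·Σ_{d|n} χ(d)(n/d)² − 4·Σ_{d|n} χ(d)d²`, where `χ` is
the nonprincipal Dirichlet character mod 4. -/
theorem six_squares (χ : ℕ → ℤ)
    (hχ : ∀ n, χ n = if n % 4 = 1 then 1 else if n % 4 = 3 then -1 else 0)
    (n : ℕ) (hn : 0 < n) :
    (Nat.card {v : Fin 6 → ℤ // ∑ i, (v i) ^ 2 = (n : ℤ)} : ℤ) =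
      16 * ∑ d ∈ n.divisors, χ d * ((n / d : ℕ) : ℤ) ^ 2
        - 4 * ∑ d ∈ n.divisors, χ d * (d : ℤ) ^ 2 := by
  have hX : ∀ k : ℕ, χ k = SixSq.X k := by
    intro k
    rw [hχ]
    unfold SixSq.X
    split_ifs <;> omega
  have hc : Nat.card {v : Fin 6 → ℤ // ∑ i, (v i) ^ 2 = (n : ℤ)} = (SixSq.R n 6 n).card := by
    rw [← Nat.card_eq_finsetCard]
    exact Nat.card_congr (Equiv.subtypeEquivRight (fun v => (SixSq.mem_R le_rfl v).symm))
  rw [hc, SixSq.main n le_rfl, SixSq.F, if_neg (by exact_mod_cast hn.ne'), SixSq.D_eq n hn,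
    Nat.sum_divisorsAntidiagonal (fun a b => SixSq.X a * (4 * (b : ℤ) ^ 2 - (a : ℤ) ^ 2)),
    Finset.mul_sum, Finset.mul_sum, Finset.mul_sum, ← Finset.sum_sub_distrib, zero_add]
  apply Finset.sum_congr rfl
  intro d _
  rw [hX]
  ring
end
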